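/- (Lemma 4.2(2): the Hodge dual 4-form of Φ.) Let φ ∈ Δ be a unit spinor. Then the quadrilinear map on ℝ^7 given by (v,w,x,y) ↦ Φ_φ(v,w,x×y) − ⟨v,x⟩⟨w,y⟩ + ⟨v,y⟩⟨w,x⟩ is an alternating 4-form. -/

import Mathlib

open RealInnerProductSpace

noncomputable section

/-- The spin representation space Δ = ℝ^8. -/
abbrev Δ : Type := EuclideanSpace ℝ (Fin 8)

/-- The standard skew endomorphism E_{ij} of ℝ^8: u_i ↦ u_j, u_j ↦ -u_i, others ↦ 0. -/
def E (i j : Fin 8) : Δ →ₗ[ℝ] Δ where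
  toFun v := v i • EuclideanSpace.single j (1 : ℝ) - v j • EuclideanSpace.single i (1 : ℝ)
  map_add' x y := by
    simp only [PiLp.add_apply, add_smul]
    module
  map_smul' c x := by
    simp only [PiLp.smul_apply, smul_eq_mul, RingHom.id_apply, mul_smul]
    module

/-- The seven Clifford endomorphisms e_1, …, e_7 (indexed 0,…,6). -/
def cliff : Fin 7 → (Δ →ₗ[ℝ] Δ) :=
  ![  E 0 7 + E 1 6 - E 2 5 - E 3 4,
    - E 0 6 + E 1 7 + E 2 4 - E 3 5,
    - E 0 5 + E 1 4 - E 2 7 + E 3 6,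
    - E 0 4 - E 1 5 - E 2 6 - E 3 7,
    - E 0 2 - E 1 3 + E 4 6 + E 5 7,
      E 0 3 - E 1 2 - E 4 7 + E 5 6,
      E 0 1 - E 2 3 - E 4 5 + E 6 7]

/-- j = e_1 ∘ e_2 ∘ e_3 ∘ e_4 ∘ e_5 ∘ e_6. -/
def jmap : Δ →ₗ[ℝ] Δ :=
  cliff 0 ∘ₗ cliff 1 ∘ₗ cliff 2 ∘ₗ cliff 3 ∘ₗ cliff 4 ∘ₗ cliff 5

/-- Clifford multiplication of a vector x ∈ ℝ^6 on a spinor. -/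
def cm6 (x : EuclideanSpace ℝ (Fin 6)) (φ : Δ) : Δ :=
  ∑ i : Fin 6, x i • cliff i.castSucc φ

/-- Clifford multiplication of a vector x ∈ ℝ^7 on a spinor. -/
def cm7 (x : EuclideanSpace ℝ (Fin 7)) (φ : Δ) : Δ :=
  ∑ i : Fin 7, x i • cliff i φ


/-- Standard basis vector of ℝ^7. -/
def v7 (i : Fin 7) : EuclideanSpace ℝ (Fin 7) := EuclideanSpace.single i (1 : ℝ)

/-- The G₂ 3-form Φ_φ(x,y,z) = ⟨x·y·z·φ, φ⟩ on ℝ^7. -/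
def PhiP (φ : Δ) (x y z : EuclideanSpace ℝ (Fin 7)) : ℝ :=
  ⟪cm7 x (cm7 y (cm7 z φ)), φ⟫

/-- Action of a trilinear form on ℝ^7 on a spinor:
τ·χ := Σ_{i<j<k} τ(v_i,v_j,v_k) e_i(e_j(e_k(χ))). -/
def tact7 (τ : EuclideanSpace ℝ (Fin 7) → EuclideanSpace ℝ (Fin 7) →
    EuclideanSpace ℝ (Fin 7) → ℝ) (χ : Δ) : Δ :=
  ∑ i : Fin 7, ∑ j : Fin 7, ∑ k : Fin 7,
    if i < j ∧ j < k then
      τ (v7 i) (v7 j) (v7 k) • cliff i (cliff j (cliff k χ))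
    else 0

/-- Action of a bilinear form on ℝ^7 on a spinor:
σ·χ := Σ_{i<j} σ(v_i,v_j) e_i(e_j(χ)). -/
def bact7 (σ : EuclideanSpace ℝ (Fin 7) → EuclideanSpace ℝ (Fin 7) → ℝ) (χ : Δ) : Δ :=
  ∑ i : Fin 7, ∑ j : Fin 7,
    if i < j then σ (v7 i) (v7 j) • cliff i (cliff j χ) else 0

/-!
Clifford multiplication `γ` by vectors is skew and satisfies `γ x (γ x s) = -⟪x, x⟫ s`. Hence for a
unit spinor `φ` the map `(c, x) ↦ c φ + γ x φ` is an isometry from `ℝ ⊕ V` into the spinors, which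
is onto because the spinors have exactly one dimension more than `V`. Reading off components, the
cross product satisfies `γ (x × y) φ = γ y (γ x φ) + ⟪x, y⟫ φ`, and since `γ · s` preserves inner
products up to the factor `⟪s, s⟫`, this gives
`⟪x × y, x × z⟫ = ⟪x, x⟫ ⟪y, z⟫ - ⟪x, y⟫ ⟪x, z⟫`. As the cross product is skew-symmetric, this
identity settles every coincidence of two arguments.
-/

section General

open Module

variable {V S : Type*} [NormedAddCommGroup V] [InnerProductSpace ℝ V]
  [NormedAddCommGroup S] [InnerProductSpace ℝ S]

/-- `γ` makes `S` a Euclidean Clifford module over `V`: vectors act by skew endomorphisms that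
square to minus their squared length. -/
structure IsCliffordMul (γ : V →ₗ[ℝ] S →ₗ[ℝ] S) : Prop where
  inner_apply_left : ∀ x s t, ⟪γ x s, t⟫ = -⟪s, γ x t⟫
  apply_apply_self : ∀ x s, γ x (γ x s) = -⟪x, x⟫ • s

/-- The 3-form `Φ_φ` of a spinor `φ` in a Clifford module. -/
def spinorForm (γ : V →ₗ[ℝ] S →ₗ[ℝ] S) (φ : S) (x y z : V) : ℝ :=
  ⟪γ x (γ y (γ z φ)), φ⟫

/-- `cross` is the cross product on `V` obtained from `Φ_φ` by raising the last index. -/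
def IsSpinorCross (γ : V →ₗ[ℝ] S →ₗ[ℝ] S) (φ : S) (cross : V → V → V) : Prop :=
  ∀ x y z, ⟪cross x y, z⟫ = spinorForm γ φ x y z

namespace IsCliffordMul

variable {γ : V →ₗ[ℝ] S →ₗ[ℝ] S} (hγ : IsCliffordMul γ)

include hγ

theorem apply_apply_swap (x y : V) (s : S) :
    γ x (γ y s) = -γ y (γ x s) - (2 * ⟪x, y⟫) • s := by
  have polarized := hγ.apply_apply_self (x + y) s
  simp only [map_add, LinearMap.add_apply, real_inner_add_add_self, hγ.apply_apply_self]
    at polarized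
  linear_combination (norm := module) polarized

theorem inner_apply_self (x : V) (s : S) : ⟪γ x s, s⟫ = 0 := by
  have skew := hγ.inner_apply_left x s s
  rw [real_inner_comm] at skew ⊢
  linarith

theorem inner_apply_apply (x y : V) (s : S) : ⟪γ x s, γ y s⟫ = ⟪x, y⟫ * ⟪s, s⟫ := by
  have hxy : ⟪γ x s, γ y s⟫ = -⟪s, γ x (γ y s)⟫ := hγ.inner_apply_left x s (γ y s)
  have hyx : ⟪γ x s, γ y s⟫ = -⟪s, γ y (γ x s)⟫ := by
    rw [real_inner_comm, hγ.inner_apply_left]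
  rw [hγ.apply_apply_swap, inner_sub_right, inner_neg_right, real_inner_smul_right] at hxy
  linarith

theorem inner_apply_apply_self (x y : V) (s : S) : ⟪γ y (γ x s), s⟫ = -(⟪x, y⟫ * ⟪s, s⟫) := by
  rw [hγ.inner_apply_left, hγ.inner_apply_apply]

theorem spinorForm_eq_inner (φ : S) (x y z : V) :
    spinorForm γ φ x y z = ⟪γ y (γ x φ), γ z φ⟫ := by
  rw [spinorForm, hγ.inner_apply_left, hγ.inner_apply_left, neg_neg, real_inner_comm]

theorem spinorForm_eq_neg_swap (φ : S) (x y z : V) :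
    spinorForm γ φ x y z = -spinorForm γ φ y x z := by
  simp only [spinorForm, hγ.apply_apply_swap x y, inner_sub_left, inner_neg_left,
    real_inner_smul_left, hγ.inner_apply_self, mul_zero, sub_zero]

theorem injective_smul_add_apply {φ : S} (hφ : φ ≠ 0) :
    Function.Injective ((LinearMap.toSpanSingleton ℝ S φ).coprod (γ.flip φ)) := by
  refine (injective_iff_map_eq_zero _).2 fun ⟨c, x⟩ hcx ↦ ?_
  have hsum : c • φ + γ x φ = 0 := by simpa using hcx
  have hc : c = 0 := by
    simpa [inner_add_left, real_inner_smul_left, hγ.inner_apply_self, hφ]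
      using congrArg (⟪·, φ⟫) hsum
  have hx : x = 0 := by
    have hγx : γ x φ = 0 := by simpa [hc] using hsum
    simpa [hγx, hφ] using hγ.inner_apply_apply x x φ
  rw [hc, hx, Prod.mk_zero_zero]

theorem exists_smul_add_apply_eq (hdim : finrank ℝ S = finrank ℝ V + 1) {φ : S} (hφ : φ ≠ 0)
    (s : S) : ∃ (c : ℝ) (x : V), c • φ + γ x φ = s := by
  have hinj := hγ.injective_smul_add_apply hφ
  have : FiniteDimensional ℝ S := .of_finrank_pos (by lia)
  have : FiniteDimensional ℝ (ℝ × V) := .of_injective _ hinj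
  have : FiniteDimensional ℝ V := .of_injective _ (LinearMap.inr_injective (R := ℝ) (M := ℝ))
  have hrank : finrank ℝ (ℝ × V) = finrank ℝ S := by
    rw [finrank_prod, finrank_self, hdim, add_comm]
  obtain ⟨⟨c, x⟩, hcx⟩ := (LinearMap.injective_iff_surjective_of_finrank_eq_finrank hrank).1 hinj s
  exact ⟨c, x, by simpa using hcx⟩

theorem ext_inner_apply (hdim : finrank ℝ S = finrank ℝ V + 1) {φ : S} (hφ : φ ≠ 0) {s t : S}
    (hself : ⟪s, φ⟫ = ⟪t, φ⟫) (happly : ∀ x, ⟪s, γ x φ⟫ = ⟪t, γ x φ⟫) : s = t := by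
  refine ext_inner_right ℝ fun u ↦ ?_
  obtain ⟨c, x, rfl⟩ := hγ.exists_smul_add_apply_eq hdim hφ u
  simp only [inner_add_right, real_inner_smul_right, hself, happly]

end IsCliffordMul

namespace IsSpinorCross

variable {γ : V →ₗ[ℝ] S →ₗ[ℝ] S} {φ : S} {cross : V → V → V} (hcross : IsSpinorCross γ φ cross)
  (hγ : IsCliffordMul γ)

include hcross hγ

theorem cross_eq_neg_swap (x y : V) : cross x y = -cross y x := by
  refine ext_inner_right ℝ fun z ↦ ?_
  rw [inner_neg_left, hcross, hcross, hγ.spinorForm_eq_neg_swap]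

theorem cross_self (x : V) : cross x x = 0 :=
  have : IsAddTorsionFree V := .of_isTorsionFree ℝ V
  self_eq_neg.1 (hcross.cross_eq_neg_swap hγ x x)

variable (hdim : finrank ℝ S = finrank ℝ V + 1) (hφ : ⟪φ, φ⟫ = 1)

include hdim hφ

theorem apply_cross (x y : V) : γ (cross x y) φ = γ y (γ x φ) + ⟪x, y⟫ • φ := by
  have hφ₀ : φ ≠ 0 := by
    rintro rfl
    simp at hφ
  refine hγ.ext_inner_apply hdim hφ₀ ?_ fun z ↦ ?_
  · rw [hγ.inner_apply_self, inner_add_left, real_inner_smul_left, hγ.inner_apply_apply_self]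
    ring
  · have hz : ⟪φ, γ z φ⟫ = 0 := by rw [real_inner_comm, hγ.inner_apply_self]
    rw [hγ.inner_apply_apply, hφ, mul_one, hcross, hγ.spinorForm_eq_inner, inner_add_left,
      real_inner_smul_left, hz, mul_zero, add_zero]

theorem inner_cross_cross (x y z : V) :
    ⟪cross x y, cross x z⟫ = ⟪x, x⟫ * ⟪y, z⟫ - ⟪x, y⟫ * ⟪x, z⟫ := by
  have hxy : ⟪γ y (γ x φ), φ⟫ = -⟪x, y⟫ := by rw [hγ.inner_apply_apply_self, hφ, mul_one]
  have hxz : ⟪φ, γ z (γ x φ)⟫ = -⟪x, z⟫ := by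
    rw [real_inner_comm, hγ.inner_apply_apply_self, hφ, mul_one]
  calc
    ⟪cross x y, cross x z⟫ = ⟪γ (cross x y) φ, γ (cross x z) φ⟫ := by
      rw [hγ.inner_apply_apply, hφ, mul_one]
    _ = ⟪γ y (γ x φ) + ⟪x, y⟫ • φ, γ z (γ x φ) + ⟪x, z⟫ • φ⟫ := by
      rw [hcross.apply_cross hγ hdim hφ, hcross.apply_cross hγ hdim hφ]
    _ = ⟪x, x⟫ * ⟪y, z⟫ - ⟪x, y⟫ * ⟪x, z⟫ := by
      simp only [inner_add_left, inner_add_right, real_inner_smul_left, real_inner_smul_right,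
        hγ.inner_apply_apply, hxy, hxz, hφ]
      ring

end IsSpinorCross

theorem starPhi_alternating_general {γ : V →ₗ[ℝ] S →ₗ[ℝ] S} (hγ : IsCliffordMul γ)
    (hdim : finrank ℝ S = finrank ℝ V + 1) {φ : S} (hφ : ⟪φ, φ⟫ = 1) {cross : V → V → V}
    (hcross : IsSpinorCross γ φ cross) (a b c : V) :
    (spinorForm γ φ a a (cross b c) - ⟪a, b⟫ * ⟪a, c⟫ + ⟪a, c⟫ * ⟪a, b⟫ = 0) ∧
    (spinorForm γ φ a b (cross a c) - ⟪a, a⟫ * ⟪b, c⟫ + ⟪a, c⟫ * ⟪b, a⟫ = 0) ∧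
    (spinorForm γ φ a b (cross c a) - ⟪a, c⟫ * ⟪b, a⟫ + ⟪a, a⟫ * ⟪b, c⟫ = 0) ∧
    (spinorForm γ φ b a (cross a c) - ⟪b, a⟫ * ⟪a, c⟫ + ⟪b, c⟫ * ⟪a, a⟫ = 0) ∧
    (spinorForm γ φ b a (cross c a) - ⟪b, c⟫ * ⟪a, a⟫ + ⟪b, a⟫ * ⟪a, c⟫ = 0) ∧
    (spinorForm γ φ b c (cross a a) - ⟪b, a⟫ * ⟪c, a⟫ + ⟪b, a⟫ * ⟪c, a⟫ = 0) := by
  simp only [← hcross _ _ _, hcross.cross_self hγ, hcross.cross_eq_neg_swap hγ b a,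
    hcross.cross_eq_neg_swap hγ c a, inner_neg_left, inner_neg_right, inner_zero_left,
    inner_zero_right, hcross.inner_cross_cross hγ hdim hφ, real_inner_comm a b]
  refine ⟨?_, ?_, ?_, ?_, ?_, ?_⟩ <;> ring

end General

/-- Clifford multiplication `cm7` as a bilinear map. -/
def cm7ₗ : EuclideanSpace ℝ (Fin 7) →ₗ[ℝ] Δ →ₗ[ℝ] Δ :=
  LinearMap.mk₂ ℝ cm7
    (fun x y s ↦ by simp only [cm7, PiLp.add_apply, add_smul, Finset.sum_add_distrib])
    (fun c x s ↦ by simp only [cm7, PiLp.smul_apply, smul_eq_mul, mul_smul, Finset.smul_sum])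
    (fun x s t ↦ by simp only [cm7, map_add, smul_add, Finset.sum_add_distrib])
    (fun c x s ↦ by simp only [cm7, map_smul, smul_comm _ c, Finset.smul_sum])

theorem inner_E_left (i j : Fin 8) (s t : Δ) : ⟪E i j s, t⟫ = -⟪s, E i j t⟫ := by
  simp [E, inner_sub_left, inner_sub_right, real_inner_smul_left, real_inner_smul_right,
    EuclideanSpace.inner_single_left, EuclideanSpace.inner_single_right, mul_comm]

theorem inner_cliff_left (i : Fin 7) (s t : Δ) : ⟪cliff i s, t⟫ = -⟪s, cliff i t⟫ := by
  fin_cases i <;>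
    simp [cliff, inner_add_left, inner_add_right, inner_sub_left, inner_sub_right, inner_E_left] <;>
    ring

theorem inner_cm7_left (x : EuclideanSpace ℝ (Fin 7)) (s t : Δ) :
    ⟪cm7 x s, t⟫ = -⟪s, cm7 x t⟫ := by
  simp only [cm7, sum_inner, inner_sum, real_inner_smul_left, real_inner_smul_right,
    inner_cliff_left, mul_neg, Finset.sum_neg_distrib]

theorem cm7_eq (x : EuclideanSpace ℝ (Fin 7)) (s : Δ) :
    cm7 x s = !₂[
      -x 0 * s 7 + x 1 * s 6 + x 2 * s 5 + x 3 * s 4 + x 4 * s 2 - x 5 * s 3 - x 6 * s 1,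
      -x 0 * s 6 - x 1 * s 7 - x 2 * s 4 + x 3 * s 5 + x 4 * s 3 + x 5 * s 2 + x 6 * s 0,
      x 0 * s 5 - x 1 * s 4 + x 2 * s 7 + x 3 * s 6 - x 4 * s 0 - x 5 * s 1 + x 6 * s 3,
      x 0 * s 4 + x 1 * s 5 - x 2 * s 6 + x 3 * s 7 - x 4 * s 1 + x 5 * s 0 - x 6 * s 2,
      -x 0 * s 3 + x 1 * s 2 + x 2 * s 1 - x 3 * s 0 - x 4 * s 6 + x 5 * s 7 + x 6 * s 5,
      -x 0 * s 2 - x 1 * s 3 - x 2 * s 0 - x 3 * s 1 - x 4 * s 7 - x 5 * s 6 - x 6 * s 4,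
      x 0 * s 1 - x 1 * s 0 + x 2 * s 3 - x 3 * s 2 + x 4 * s 4 + x 5 * s 5 - x 6 * s 7,
      x 0 * s 0 + x 1 * s 1 - x 2 * s 2 - x 3 * s 3 + x 4 * s 5 - x 5 * s 4 + x 6 * s 6] := by
  ext k
  fin_cases k <;> simp [cm7, cliff, E, Fin.sum_univ_succ] <;> ring_nf

theorem cm7_cm7_self (x : EuclideanSpace ℝ (Fin 7)) (s : Δ) :
    cm7 x (cm7 x s) = -⟪x, x⟫ • s := by
  have hxx : ⟪x, x⟫ = x 0 ^ 2 + x 1 ^ 2 + x 2 ^ 2 + x 3 ^ 2 + x 4 ^ 2 + x 5 ^ 2 + x 6 ^ 2 := by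
    rw [real_inner_self_eq_norm_sq, EuclideanSpace.real_norm_sq_eq, Fin.sum_univ_seven]
  rw [hxx, cm7_eq, cm7_eq]
  ext k
  fin_cases k <;> simp <;> ring

theorem spinorForm_cm7ₗ (φ : Δ) (x y z : EuclideanSpace ℝ (Fin 7)) :
    spinorForm cm7ₗ φ x y z = PhiP φ x y z := rfl

theorem isSpinorCross_cm7ₗ_iff {φ : Δ}
    {cross : EuclideanSpace ℝ (Fin 7) → EuclideanSpace ℝ (Fin 7) → EuclideanSpace ℝ (Fin 7)} :
    IsSpinorCross cm7ₗ φ cross ↔ ∀ x y z, ⟪cross x y, z⟫ = PhiP φ x y z := by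
  simp only [IsSpinorCross, spinorForm_cm7ₗ]

theorem isCliffordMul_cm7ₗ : IsCliffordMul cm7ₗ :=
  ⟨inner_cm7_left, cm7_cm7_self⟩

/-- Lemma 4.2(2): the quadrilinear map
(v,w,x,y) ↦ Φ_φ(v,w,x×y) - ⟨v,x⟩⟨w,y⟩ + ⟨v,y⟩⟨w,x⟩
is an alternating 4-form, i.e. it vanishes whenever two arguments coincide. -/
theorem starPhi_alternating (φ : Δ) (hφ : ⟪φ, φ⟫ = 1)
    (cross : EuclideanSpace ℝ (Fin 7) → EuclideanSpace ℝ (Fin 7) →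
      EuclideanSpace ℝ (Fin 7))
    (hcross : ∀ x y z : EuclideanSpace ℝ (Fin 7), ⟪cross x y, z⟫ = PhiP φ x y z) :
    ∀ a b c : EuclideanSpace ℝ (Fin 7),
      (PhiP φ a a (cross b c) - ⟪a, b⟫ * ⟪a, c⟫ + ⟪a, c⟫ * ⟪a, b⟫ = 0) ∧
      (PhiP φ a b (cross a c) - ⟪a, a⟫ * ⟪b, c⟫ + ⟪a, c⟫ * ⟪b, a⟫ = 0) ∧
      (PhiP φ a b (cross c a) - ⟪a, c⟫ * ⟪b, a⟫ + ⟪a, a⟫ * ⟪b, c⟫ = 0) ∧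
      (PhiP φ b a (cross a c) - ⟪b, a⟫ * ⟪a, c⟫ + ⟪b, c⟫ * ⟪a, a⟫ = 0) ∧
      (PhiP φ b a (cross c a) - ⟪b, c⟫ * ⟪a, a⟫ + ⟪b, a⟫ * ⟪a, c⟫ = 0) ∧
      (PhiP φ b c (cross a a) - ⟪b, a⟫ * ⟪c, a⟫ + ⟪b, a⟫ * ⟪c, a⟫ = 0) := by
  simpa only [spinorForm_cm7ₗ] using starPhi_alternating_general isCliffordMul_cm7ₗ
    (by simp only [finrank_euclideanSpace_fin]) hφ (isSpinorCross_cm7ₗ_iff.2 hcross)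

end
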